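/- If no two generators of a rank-n Coxeter system (W,S) commute and all off-diagonal Coxeter matrix entries are at least 3, then every small root is a nonnegative combination of at most two simple roots, i.e., in the projective picture all small roots lie on the edges of the simplex conv(Δ). -/

import Mathlib

open scoped Classical

/-- A geometric representation (with based root system) of a Coxeter system `cs`
on a real vector space `V`, preserving a symmetric bilinear form `form`, with
simple roots `root i` satisfying the standard inner products
`B(α_i, α_j) = -cos (π / m i j)` (with value `≤ -1` when `m i j = ∞`, encoded `0`). -/
structure GeomRep {B : Type*} {W : Type*} [Group W] (M : CoxeterMatrix B)
    (cs : CoxeterSystem M W) (V : Type*) [AddCommGroup V] [Module ℝ V] where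
  form : LinearMap.BilinForm ℝ V
  form_symm : ∀ u v : V, form u v = form v u
  ρ : W →* (V ≃ₗ[ℝ] V)
  ρ_faithful : Function.Injective ρ
  root : B → V
  root_indep : LinearIndependent ℝ root
  form_preserved : ∀ (w : W) (u v : V), form (ρ w u) (ρ w v) = form u v
  form_root_finite : ∀ i j : B, M i j ≠ 0 →
    form (root i) (root j) = - Real.cos (Real.pi / (M i j : ℝ))
  form_root_infinite : ∀ i j : B, M i j = 0 → form (root i) (root j) ≤ -1
  simple_act : ∀ (i : B) (v : V),
    ρ (cs.simple i) v = v - (2 * form (root i) v) • root i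

namespace GeomRep

variable {B : Type*} {W : Type*} [Group W] {M : CoxeterMatrix B}
  {cs : CoxeterSystem M W} {V : Type*} [AddCommGroup V] [Module ℝ V]
  (G : GeomRep M cs V)

/-- The root system `Φ = W · Δ`. -/
def Roots : Set V := {v | ∃ (w : W) (i : B), v = G.ρ w (G.root i)}

/-- `v` is a nonnegative linear combination of simple roots. -/
def IsNonnegComb (v : V) : Prop :=
  ∃ c : B →₀ ℝ, (∀ i, 0 ≤ c i) ∧ v = c.sum fun i a => a • G.root i

/-- The set of positive roots `Φ⁺`. -/
def PosRoots : Set V := {v ∈ G.Roots | G.IsNonnegComb v}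

/-- The set of negative roots `Φ⁻ = -Φ⁺`. -/
def NegRoots : Set V := {v ∈ G.Roots | G.IsNonnegComb (-v)}

/-- The reflection in a root `α`, as a linear endomorphism of `V`. -/
def refl (α : V) : Module.End ℝ V :=
  LinearMap.id - (2 : ℝ) • LinearMap.smulRight (G.form α) α

/-- The (left) inversion set `N(w) = Φ⁺ ∩ w(Φ⁻)`. -/
def invSet (w : W) : Set V := {β ∈ G.PosRoots | G.ρ w⁻¹ β ∈ G.NegRoots}

/-- `β` dominates `α` : every `w` sending `β` negative sends `α` negative. -/
def Dominates (β α : V) : Prop := ∀ w : W, G.ρ w β ∈ G.NegRoots → G.ρ w α ∈ G.NegRoots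

/-- A small root: a positive root dominating no positive root other than itself. -/
def IsSmall (β : V) : Prop :=
  β ∈ G.PosRoots ∧ ∀ α ∈ G.PosRoots, G.Dominates β α → α = β

/-- The conical (nonnegative) hull of a set. -/
def cone (X : Set V) : Set V :=
  {v | ∃ c : V →₀ ℝ, (∀ x, 0 ≤ c x) ∧ ↑c.support ⊆ X ∧ v = c.sum fun x a => a • x}

/-- Low element: its inversion set is the biconvex closure of its small inversions. -/
def IsLow (Sm : Set V) (w : W) : Prop :=
  G.invSet w = cone (G.invSet w ∩ Sm) ∩ G.PosRoots

/-- The closed fundamental chamber. -/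
def chamber : Set V := {v | ∀ i : B, 0 ≤ G.form v (G.root i)}

/-- The Tits cone `T = ⋃_{w ∈ W} w(C̄)`. -/
def titsCone : Set V := ⋃ w : W, ⇑(G.ρ w) '' G.chamber

end GeomRep

/-!
Every coefficient of a positive root in the basis of simple roots is `0` or at least `1`: the
parabolic descent showing that a root is positive or negative multiplies coefficients only by values
of rescaled Chebyshev polynomials, and these lie in the semiring `{0} ∪ [1, ∞)`.

Let `β` be a small root and `r` a simple index with `B(α_r, β) > 0`. Then `γ = s_r β` is again small
(or `β = α_r`), and the reflection in `γ` is shorter than the one in `β`, so by induction `γ` has at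
most two simple roots in its support. If `β` had three, `r` would be outside the support of `γ`,
which would consist of two simple roots; both have coefficient at least `1` and form at most `-1/2`
with `α_r`, so that `B(α_r, β) = -B(α_r, γ) ≥ 1`. But then `β` dominates `α_r`: if `w` made `β`
negative and `α_r` positive, it would make infinitely many positive roots of the plane spanned by
`α_r` and `β` negative.
-/

section Chebyshev

open Polynomial Polynomial.Chebyshev

/-- The subsemiring `{0} ∪ [1, ∞)` of `ℝ`, in which the coefficients of positive roots lie. -/
def zeroOrGeOne : Subsemiring ℝ where
  carrier := {x | x = 0 ∨ 1 ≤ x}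
  zero_mem' := Or.inl rfl
  one_mem' := Or.inr le_rfl
  add_mem' := by
    rintro x y (rfl | hx) (rfl | hy)
    · exact Or.inl (add_zero 0)
    · exact Or.inr (by linarith)
    · exact Or.inr (by linarith)
    · exact Or.inr (by linarith)
  mul_mem' := by
    rintro x y (rfl | hx) (rfl | hy)
    · exact Or.inl (mul_zero 0)
    · exact Or.inl (zero_mul y)
    · exact Or.inl (mul_zero x)
    · exact Or.inr (one_le_mul_of_one_le_of_one_le hx hy)

theorem nonneg_of_mem_zeroOrGeOne {x : ℝ} (hx : x ∈ zeroOrGeOne) : 0 ≤ x := by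
  rcases hx with rfl | hx <;> linarith

theorem le_eval_S_sub_one {x : ℝ} (hx : 2 ≤ x) (n : ℕ) :
    (n : ℝ) ≤ (S ℝ (n - 1)).eval x ∧ (S ℝ (n - 1)).eval x + 1 ≤ (S ℝ n).eval x := by
  induction n with
  | zero => simp
  | succ n ih =>
    obtain ⟨hn, hstep⟩ := ih
    have hrec : (S ℝ (n + 1)).eval x = x * (S ℝ n).eval x - (S ℝ (n - 1)).eval x := by
      simp [S_add_one]
    push_cast
    rw [add_sub_cancel_right, hrec]
    have : (0 : ℝ) ≤ n := n.cast_nonneg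
    exact ⟨by linarith, by nlinarith⟩

theorem eval_S_mem_zeroOrGeOne_of_two_le {x : ℝ} (hx : 2 ≤ x) {n : ℤ} (hn : -1 ≤ n) :
    (S ℝ n).eval x ∈ zeroOrGeOne := by
  rcases hn.eq_or_lt with rfl | hn
  · simp
  · lift n to ℕ using by lia
    obtain ⟨hle, hstep⟩ := le_eval_S_sub_one hx n
    exact Or.inr (by linarith [n.cast_nonneg (α := ℝ)])

theorem sin_le_sin_of_mem_Icc_pi_sub {x y : ℝ} (hx : x ∈ Set.Icc 0 Real.pi)
    (hy : y ∈ Set.Icc x (Real.pi - x)) : Real.sin x ≤ Real.sin y := by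
  have hx' : Real.pi - x ∈ Set.Icc 0 Real.pi := ⟨by linarith [hx.2], by linarith [hx.1]⟩
  simpa using strictConcaveOn_sin_Icc.concaveOn.min_le_of_mem_Icc hx hx' hy

theorem eval_S_two_mul_cos_mem_zeroOrGeOne {m : ℕ} (hm : 2 ≤ m) {n : ℤ} (hn : -1 ≤ n)
    (hnm : n + 1 ≤ m) : (S ℝ n).eval (2 * Real.cos (Real.pi / m)) ∈ zeroOrGeOne := by
  have hm' : (2 : ℝ) ≤ m := by exact_mod_cast hm
  set θ := Real.pi / m with hθ
  have hmθ : m * θ = Real.pi := by rw [hθ]; field_simp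
  have hθ_pos : 0 < θ := by positivity
  have hθ_lt : θ < Real.pi := by nlinarith
  have hsin : 0 < Real.sin θ := Real.sin_pos_of_pos_of_lt_pi hθ_pos hθ_lt
  have heval := S_two_mul_real_cos θ n
  rcases hn.eq_or_lt with rfl | hn
  · simp
  rcases hnm.eq_or_lt with hnm | hnm
  · have hnm' : (n : ℝ) + 1 = m := by exact_mod_cast hnm
    rw [hnm', hmθ, Real.sin_pi] at heval
    exact Or.inl ((mul_eq_zero.1 heval).resolve_right hsin.ne')
  · have hn' : (1 : ℝ) ≤ n + 1 := by exact_mod_cast (by lia : 1 ≤ n + 1)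
    have hnm' : (n : ℝ) + 1 + 1 ≤ m := by exact_mod_cast (by lia : n + 1 + 1 ≤ m)
    have hle : Real.sin θ ≤ Real.sin ((n + 1) * θ) :=
      sin_le_sin_of_mem_Icc_pi_sub ⟨hθ_pos.le, hθ_lt.le⟩ ⟨by nlinarith, by nlinarith⟩
    exact Or.inr (le_of_mul_le_mul_right (by linarith) hsin)

end Chebyshev

section AlternatingWord

open CoxeterSystem

variable {B W : Type*} [Group W] {M : CoxeterMatrix B} (cs : CoxeterSystem M W)

theorem le_of_length_mul_alternatingWord_inv {v : W} {i j : B} {k : ℕ}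
    (h : cs.length (v * (cs.wordProd (alternatingWord i j k))⁻¹) = cs.length v + k) :
    M i j = 0 ∨ k ≤ M i j := by
  by_contra! hM
  refine cs.not_isReduced_alternatingWord i j hM.1 hM.2 ?_
  have hmul := cs.length_mul_le v (cs.wordProd (alternatingWord i j k))⁻¹
  have hword := cs.length_wordProd_le (alternatingWord i j k)
  rw [cs.length_inv] at hmul
  rw [length_alternatingWord] at hword
  rw [CoxeterSystem.IsReduced, length_alternatingWord]
  lia

theorem length_mul_simple_mul_alternatingWord_inv {v : W} {i j : B} {k : ℕ}
    (hj : cs.IsRightDescent v j)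
    (h : cs.length (v * (cs.wordProd (alternatingWord j i k))⁻¹) = cs.length v + k) :
    cs.length (v * cs.simple j * (cs.wordProd (alternatingWord i j (k + 1)))⁻¹) =
      cs.length (v * cs.simple j) + (k + 1) := by
  rw [cs.isRightDescent_iff] at hj
  rw [alternatingWord_succ, cs.wordProd_concat, mul_inv_rev, cs.inv_simple, ← mul_assoc,
    cs.simple_mul_simple_cancel_right]
  lia

end AlternatingWord

namespace GeomRep

open CoxeterSystem Polynomial.Chebyshev

section Basic

variable {B W V : Type*} [Group W] {M : CoxeterMatrix B} {cs : CoxeterSystem M W}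
  [AddCommGroup V] [Module ℝ V] (G : GeomRep M cs V)

theorem form_root_self (i : B) : G.form (G.root i) (G.root i) = 1 := by
  simp [G.form_root_finite i i (by simp)]

theorem simple_act_root_self (i : B) : G.ρ (cs.simple i) (G.root i) = -G.root i := by
  rw [G.simple_act, form_root_self]
  module

theorem simple_act_simple_act (i : B) (v : V) :
    G.ρ (cs.simple i) (G.ρ (cs.simple i) v) = v := by
  rw [← LinearEquiv.mul_apply, ← map_mul, cs.simple_mul_simple_self, map_one,
    LinearEquiv.coe_one, id]

theorem form_root_simple_act (i : B) (v : V) :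
    G.form (G.root i) (G.ρ (cs.simple i) v) = -G.form (G.root i) v := by
  rw [← G.form_preserved (cs.simple i), simple_act_simple_act, simple_act_root_self, map_neg,
    LinearMap.neg_apply]

theorem refl_apply (α v : V) : G.refl α v = v - (2 * G.form α v) • α := by
  simp [refl, mul_smul]

theorem root_mem_roots (i : B) : G.root i ∈ G.Roots := ⟨1, i, by simp⟩

theorem form_self_of_mem_roots {v : V} (hv : v ∈ G.Roots) : G.form v v = 1 := by
  obtain ⟨w, i, rfl⟩ := hv
  rw [G.form_preserved, form_root_self]

theorem ne_zero_of_mem_roots {v : V} (hv : v ∈ G.Roots) : v ≠ 0 := by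
  rintro rfl
  simpa using G.form_self_of_mem_roots hv

theorem act_mem_roots (w : W) {v : V} (hv : v ∈ G.Roots) : G.ρ w v ∈ G.Roots := by
  obtain ⟨u, i, rfl⟩ := hv
  exact ⟨w * u, i, by rw [map_mul, LinearEquiv.mul_apply]⟩

theorem neg_mem_roots {v : V} (hv : v ∈ G.Roots) : -v ∈ G.Roots := by
  obtain ⟨u, i, rfl⟩ := hv
  exact ⟨u * cs.simple i, i, by
    rw [map_mul, LinearEquiv.mul_apply, simple_act_root_self, map_neg]⟩

theorem conj_act_eq_refl {β : V} {t : W} (ht : ∀ v, G.ρ t v = G.refl β v) (w : W) (v : V) :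
    G.ρ (w * t * w⁻¹) v = G.refl (G.ρ w β) v := by
  have hcancel : G.ρ w (G.ρ w⁻¹ v) = v := by
    rw [← LinearEquiv.mul_apply, ← map_mul, mul_inv_cancel, map_one, LinearEquiv.coe_one, id]
  have hform : G.form (G.ρ w β) v = G.form β (G.ρ w⁻¹ v) := by
    rw [← G.form_preserved w β, hcancel]
  rw [map_mul, map_mul, LinearEquiv.mul_apply, LinearEquiv.mul_apply, ht, refl_apply, refl_apply,
    map_sub, map_smul, hcancel, hform]

theorem exists_isReflection_act_eq_refl {β : V} (hβ : β ∈ G.Roots) :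
    ∃ t, cs.IsReflection t ∧ ∀ v, G.ρ t v = G.refl β v := by
  obtain ⟨w, i, rfl⟩ := hβ
  exact ⟨w * cs.simple i * w⁻¹, (cs.isReflection_simple i).conj w,
    G.conj_act_eq_refl (fun v => by rw [G.simple_act, refl_apply]) w⟩

theorem refl_mem_roots {α β : V} (hα : α ∈ G.Roots) (hβ : β ∈ G.Roots) :
    G.refl α β ∈ G.Roots := by
  obtain ⟨t, -, ht⟩ := G.exists_isReflection_act_eq_refl hα
  exact ht β ▸ G.act_mem_roots t hβ

theorem refl_self {β : V} (hβ : β ∈ G.Roots) : G.refl β β = -β := by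
  rw [refl_apply, G.form_self_of_mem_roots hβ]
  module

theorem eval_S_smul_sub_mem_roots {α β : V} (hα : α ∈ G.Roots) (hβ : β ∈ G.Roots) (n : ℕ) :
    (S ℝ n).eval (2 * G.form α β) • α - (S ℝ (n - 1)).eval (2 * G.form α β) • β ∈ G.Roots := by
  induction n generalizing α β with
  | zero => simpa using hα
  | succ n ih =>
    convert G.neg_mem_roots (G.refl_mem_roots hα (ih hβ hα)) using 1
    rw [G.form_symm β α]
    simp only [refl_apply, map_sub, map_smul, G.form_self_of_mem_roots hα, Nat.cast_add,
      Nat.cast_one, add_sub_cancel_right, S_add_one, Polynomial.eval_sub, Polynomial.eval_mul,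
      Polynomial.eval_X]
    module

variable {G} in
theorem IsNonnegComb.smul_add_smul {u v : V} {a b : ℝ} (ha : 0 ≤ a) (hb : 0 ≤ b)
    (hu : G.IsNonnegComb u) (hv : G.IsNonnegComb v) : G.IsNonnegComb (a • u + b • v) := by
  obtain ⟨c, hc, rfl⟩ := hu
  obtain ⟨d, hd, rfl⟩ := hv
  refine ⟨a • c + b • d, fun i => ?_, ?_⟩
  · have := hc i
    have := hd i
    simp only [Finsupp.add_apply, Finsupp.smul_apply, smul_eq_mul]
    positivity
  · simp only [← Finsupp.linearCombination_apply, map_add, map_smul]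

theorem isNonnegComb_root (i : B) : G.IsNonnegComb (G.root i) :=
  ⟨Finsupp.single i 1, fun j => by
    rw [Finsupp.single_apply]
    split_ifs <;> norm_num, by simp⟩

theorem root_mem_posRoots (i : B) : G.root i ∈ G.PosRoots :=
  ⟨G.root_mem_roots i, G.isNonnegComb_root i⟩

theorem neg_mem_negRoots {v : V} (hv : v ∈ G.PosRoots) : -v ∈ G.NegRoots :=
  ⟨G.neg_mem_roots hv.1, by rw [neg_neg]; exact hv.2⟩

/-- Coordinates with respect to the simple roots, extended arbitrarily from their span to all of
`V`, on which they are therefore meaningful only for combinations of simple roots. -/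
noncomputable def coord : V →ₗ[ℝ] B →₀ ℝ :=
  (Finsupp.linearCombination ℝ G.root).leftInverse

theorem coord_linearCombination (c : B →₀ ℝ) :
    G.coord (Finsupp.linearCombination ℝ G.root c) = c :=
  LinearMap.leftInverse_apply_of_inj (LinearMap.ker_eq_bot.2 G.root_indep) c

theorem coord_root (i : B) : G.coord (G.root i) = Finsupp.single i 1 := by
  simpa using G.coord_linearCombination (Finsupp.single i 1)

theorem coord_simple_act_of_ne {i j : B} (hj : j ≠ i) (v : V) :
    G.coord (G.ρ (cs.simple i) v) j = G.coord v j := by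
  simp [G.simple_act, coord_root, hj.symm]

variable {G} in
theorem IsNonnegComb.coord_nonneg {v : V} (hv : G.IsNonnegComb v) (i : B) : 0 ≤ G.coord v i := by
  obtain ⟨c, hc, rfl⟩ := hv
  rw [← Finsupp.linearCombination_apply, coord_linearCombination]
  exact hc i

variable {G} in
theorem IsNonnegComb.linearCombination_coord {v : V} (hv : G.IsNonnegComb v) :
    Finsupp.linearCombination ℝ G.root (G.coord v) = v := by
  obtain ⟨c, -, rfl⟩ := hv
  rw [← Finsupp.linearCombination_apply, coord_linearCombination]

theorem coord_nonpos_of_mem_negRoots {v : V} (hv : v ∈ G.NegRoots) (i : B) :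
    G.coord v i ≤ 0 := by
  simpa using hv.2.coord_nonneg i

theorem notMem_negRoots_of_mem_posRoots {v : V} (hv : v ∈ G.PosRoots) : v ∉ G.NegRoots := by
  intro hneg
  have hcoord : G.coord v = 0 := Finsupp.ext fun i =>
    le_antisymm (G.coord_nonpos_of_mem_negRoots hneg i) (hv.2.coord_nonneg i)
  apply G.ne_zero_of_mem_roots hv.1
  rw [← hv.2.linearCombination_coord, hcoord, map_zero]

theorem exists_coord_pos_of_ne_root {v : V} (hv : v ∈ G.PosRoots) {i : B} (hne : v ≠ G.root i) :
    ∃ j, j ≠ i ∧ 0 < G.coord v j := by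
  by_contra! hle
  have hcoord : G.coord v = Finsupp.single i (G.coord v i) := by
    ext j
    rcases eq_or_ne j i with rfl | hj
    · rw [Finsupp.single_eq_same]
    · rw [Finsupp.single_eq_of_ne hj]
      exact le_antisymm (hle j hj) (hv.2.coord_nonneg j)
  have hsmul : v = G.coord v i • G.root i := by
    conv_lhs => rw [← hv.2.linearCombination_coord, hcoord, Finsupp.linearCombination_single]
  have hsq : G.coord v i * G.coord v i = 1 := by
    have hform := G.form_self_of_mem_roots hv.1
    rw [hsmul] at hform
    simpa [form_root_self, coord_root] using hform
  have hone : G.coord v i = 1 := by nlinarith [hv.2.coord_nonneg i]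
  rw [hone, one_smul] at hsmul
  exact hne hsmul

theorem exists_form_root_pos {β : V} (hβ : β ∈ G.PosRoots) : ∃ i, 0 < G.form (G.root i) β := by
  by_contra! hle
  have hform : G.form (Finsupp.linearCombination ℝ G.root (G.coord β)) β ≤ 0 := by
    rw [Finsupp.linearCombination_apply, Finsupp.sum, map_sum, LinearMap.sum_apply]
    refine Finset.sum_nonpos fun i _ => ?_
    rw [map_smul, LinearMap.smul_apply, smul_eq_mul]
    exact mul_nonpos_of_nonneg_of_nonpos (hβ.2.coord_nonneg i) (hle i)
  rw [hβ.2.linearCombination_coord, G.form_self_of_mem_roots hβ.1] at hform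
  linarith

end Basic

section Positivity

variable {B W V : Type*} [Group W] {M : CoxeterMatrix B} {cs : CoxeterSystem M W}
  [AddCommGroup V] [Module ℝ V] (G : GeomRep M cs V)

/-- The combinations of simple roots all of whose coefficients are `0` or at least `1`, as a
semimodule over `zeroOrGeOne`. -/
def zeroOrGeOneSpan : Submodule zeroOrGeOne V := Submodule.span zeroOrGeOne (Set.range G.root)

theorem root_mem_zeroOrGeOneSpan (i : B) : G.root i ∈ G.zeroOrGeOneSpan :=
  Submodule.subset_span ⟨i, rfl⟩

theorem smul_mem_zeroOrGeOneSpan {a : ℝ} (ha : a ∈ zeroOrGeOne) {v : V}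
    (hv : v ∈ G.zeroOrGeOneSpan) : a • v ∈ G.zeroOrGeOneSpan :=
  G.zeroOrGeOneSpan.smul_mem ⟨a, ha⟩ hv

theorem coord_mem_zeroOrGeOne_of_mem_span {v : V} (hv : v ∈ G.zeroOrGeOneSpan) (i : B) :
    G.coord v i ∈ zeroOrGeOne := by
  induction hv using Submodule.span_induction with
  | mem v hv =>
    obtain ⟨j, rfl⟩ := hv
    rw [coord_root, Finsupp.single_apply]
    split_ifs
    · exact one_mem _
    · exact zero_mem _
  | zero => simp
  | add u v _ _ hu hv => simpa using add_mem hu hv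
  | smul a v _ hv => simpa [Subsemiring.smul_def] using mul_mem a.2 hv

theorem isNonnegComb_of_mem_zeroOrGeOneSpan {v : V} (hv : v ∈ G.zeroOrGeOneSpan) :
    G.IsNonnegComb v := by
  induction hv using Submodule.span_induction with
  | mem v hv =>
    obtain ⟨i, rfl⟩ := hv
    exact G.isNonnegComb_root i
  | zero => exact ⟨0, fun _ => le_rfl, by simp⟩
  | add u v _ _ hu hv => simpa using hu.smul_add_smul zero_le_one zero_le_one hv
  | smul a v _ hv =>
    simpa [Subsemiring.smul_def] using
      hv.smul_add_smul (nonneg_of_mem_zeroOrGeOne a.2) le_rfl hv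

theorem eval_S_form_root_mem_zeroOrGeOne {i j : B} (hij : i ≠ j) {n : ℤ} (hn : -1 ≤ n)
    (hnM : M i j = 0 ∨ n + 1 ≤ M i j) :
    (S ℝ n).eval (-2 * G.form (G.root i) (G.root j)) ∈ zeroOrGeOne := by
  by_cases hM : M i j = 0
  · exact eval_S_mem_zeroOrGeOne_of_two_le (by linarith [G.form_root_infinite i j hM]) hn
  · have hM_ne_one := M.off_diagonal i j hij
    rw [G.form_root_finite i j hM, neg_mul_neg]
    exact eval_S_two_mul_cos_mem_zeroOrGeOne (by lia) hn (hnM.resolve_left hM)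

theorem eval_S_smul_act_root_add (v : W) (i j : B) (n : ℤ) :
    (S ℝ n).eval (-2 * G.form (G.root i) (G.root j)) • G.ρ v (G.root i) +
      (S ℝ (n - 1)).eval (-2 * G.form (G.root i) (G.root j)) • G.ρ v (G.root j) =
    (S ℝ (n + 1)).eval (-2 * G.form (G.root j) (G.root i)) • G.ρ (v * cs.simple j) (G.root j) +
      (S ℝ n).eval (-2 * G.form (G.root j) (G.root i)) • G.ρ (v * cs.simple j) (G.root i) := by
  rw [G.form_symm (G.root j), map_mul, LinearEquiv.mul_apply, LinearEquiv.mul_apply,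
    simple_act_root_self, G.simple_act, G.form_symm (G.root j)]
  simp only [map_neg, map_sub, map_smul, S_add_one, Polynomial.eval_sub, Polynomial.eval_mul,
    Polynomial.eval_X]
  module

/-- Descent inside the coset `v⟨s_i, s_j⟩`: the invariant `hk`, that `v` can be lengthened by
`k + 1` alternating letters, keeps the Chebyshev index `k` below `M i j` at the minimal element of
the coset. -/
theorem eval_S_smul_act_root_add_mem {N : ℕ}
    (hN : ∀ u r, cs.length u < N → ¬cs.IsRightDescent u r → G.ρ u (G.root r) ∈ G.zeroOrGeOneSpan)
    {v : W} {i j : B} {k : ℕ} (hv : cs.length v < N) (hij : i ≠ j) (hi : ¬cs.IsRightDescent v i)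
    (hk : cs.length (v * (cs.wordProd (alternatingWord j i (k + 1)))⁻¹) =
      cs.length v + (k + 1)) :
    (S ℝ k).eval (-2 * G.form (G.root i) (G.root j)) • G.ρ v (G.root i) +
      (S ℝ (k - 1)).eval (-2 * G.form (G.root i) (G.root j)) • G.ρ v (G.root j) ∈
        G.zeroOrGeOneSpan := by
  induction hl : cs.length v using Nat.strong_induction_on generalizing v i j k with
  | _ l ih =>
  by_cases hj : cs.IsRightDescent v j
  · have hlt : cs.length (v * cs.simple j) < cs.length v := hj
    have hmem := ih _ (hl ▸ hlt) (hlt.trans hv) hij.symm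
      (cs.isRightDescent_iff_not_isRightDescent_mul.1 hj)
      (length_mul_simple_mul_alternatingWord_inv cs hj hk) rfl
    rw [eval_S_smul_act_root_add]
    simpa using hmem
  · have hM : M i j = 0 ∨ k + 1 ≤ M i j := by
      simpa only [M.symmetric j i] using le_of_length_mul_alternatingWord_inv cs hk
    exact add_mem
      (G.smul_mem_zeroOrGeOneSpan
        (G.eval_S_form_root_mem_zeroOrGeOne hij (by lia) (by lia)) (hN v i hv hi))
      (G.smul_mem_zeroOrGeOneSpan
        (G.eval_S_form_root_mem_zeroOrGeOne hij (by lia) (by lia)) (hN v j hv hj))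

theorem act_root_mem_zeroOrGeOneSpan {w : W} {i : B} (hi : ¬cs.IsRightDescent w i) :
    G.ρ w (G.root i) ∈ G.zeroOrGeOneSpan := by
  induction hl : cs.length w using Nat.strong_induction_on generalizing w i with
  | _ l ih =>
  rcases eq_or_ne w 1 with rfl | hw
  · simpa using G.root_mem_zeroOrGeOneSpan i
  obtain ⟨j, hj⟩ := cs.exists_rightDescent_of_ne_one hw
  have hij : i ≠ j := by
    rintro rfl
    exact hi hj
  have hk : cs.length (w * (cs.wordProd (alternatingWord j i 1))⁻¹) = cs.length w + 1 := by
    simpa [alternatingWord] using cs.not_isRightDescent_iff.1 hi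
  have hmem := G.eval_S_smul_act_root_add_mem (N := l) (fun u r hu hr => ih _ hu hr rfl)
    (hl ▸ hj) hij.symm (cs.isRightDescent_iff_not_isRightDescent_mul.1 hj)
    (length_mul_simple_mul_alternatingWord_inv cs hj hk)
  have hexpand := G.eval_S_smul_act_root_add w i j 0
  simp only [S_zero, Polynomial.eval_one, one_smul, zero_sub, S_neg_one, Polynomial.eval_zero,
    zero_smul, add_zero] at hexpand
  rw [hexpand]
  simpa using hmem

theorem mem_or_neg_mem_zeroOrGeOneSpan {v : V} (hv : v ∈ G.Roots) :
    v ∈ G.zeroOrGeOneSpan ∨ -v ∈ G.zeroOrGeOneSpan := by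
  obtain ⟨w, i, rfl⟩ := hv
  by_cases hi : cs.IsRightDescent w i
  · right
    simpa [simple_act_root_self] using
      G.act_root_mem_zeroOrGeOneSpan (cs.isRightDescent_iff_not_isRightDescent_mul.1 hi)
  · exact Or.inl (G.act_root_mem_zeroOrGeOneSpan hi)

theorem mem_posRoots_or_mem_negRoots {v : V} (hv : v ∈ G.Roots) :
    v ∈ G.PosRoots ∨ v ∈ G.NegRoots :=
  (G.mem_or_neg_mem_zeroOrGeOneSpan hv).imp
    (fun h => ⟨hv, G.isNonnegComb_of_mem_zeroOrGeOneSpan h⟩)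
    (fun h => ⟨hv, G.isNonnegComb_of_mem_zeroOrGeOneSpan h⟩)

theorem coord_mem_zeroOrGeOne {v : V} (hv : v ∈ G.PosRoots) (i : B) :
    G.coord v i ∈ zeroOrGeOne := by
  have hmem : v ∈ G.zeroOrGeOneSpan :=
    (G.mem_or_neg_mem_zeroOrGeOneSpan hv.1).resolve_right fun hneg =>
      G.notMem_negRoots_of_mem_posRoots hv ⟨hv.1, G.isNonnegComb_of_mem_zeroOrGeOneSpan hneg⟩
  exact G.coord_mem_zeroOrGeOne_of_mem_span hmem i

theorem mem_posRoots_of_coord_pos {v : V} (hv : v ∈ G.Roots) {i : B} (hi : 0 < G.coord v i) :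
    v ∈ G.PosRoots :=
  (G.mem_posRoots_or_mem_negRoots hv).resolve_right fun hneg =>
    (G.coord_nonpos_of_mem_negRoots hneg i).not_gt hi

theorem mem_negRoots_of_coord_neg {v : V} (hv : v ∈ G.Roots) {i : B} (hi : G.coord v i < 0) :
    v ∈ G.NegRoots :=
  (G.mem_posRoots_or_mem_negRoots hv).resolve_left fun hpos => (hpos.2.coord_nonneg i).not_gt hi

theorem isRightDescent_of_act_root_mem_negRoots {w : W} {i : B}
    (h : G.ρ w (G.root i) ∈ G.NegRoots) : cs.IsRightDescent w i := by
  by_contra hi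
  have hpos := G.isNonnegComb_of_mem_zeroOrGeOneSpan (G.act_root_mem_zeroOrGeOneSpan hi)
  exact G.notMem_negRoots_of_mem_posRoots ⟨h.1, hpos⟩ h

theorem simple_act_mem_posRoots {v : V} (hv : v ∈ G.PosRoots) {i : B} (hne : v ≠ G.root i) :
    G.ρ (cs.simple i) v ∈ G.PosRoots := by
  obtain ⟨j, hj, hpos⟩ := G.exists_coord_pos_of_ne_root hv hne
  rw [← G.coord_simple_act_of_ne hj] at hpos
  exact G.mem_posRoots_of_coord_pos (G.act_mem_roots _ hv.1) hpos

theorem finite_invSet (w : W) : (G.invSet w).Finite := by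
  induction w using cs.simple_induction_right with
  | one =>
    refine Set.finite_empty.subset fun v hv => G.notMem_negRoots_of_mem_posRoots hv.1 ?_
    simpa using hv.2
  | mul_simple_right w i ih =>
    refine (ih.union (Set.finite_singleton (G.ρ w (G.root i)))).subset ?_
    rintro v ⟨hv, hneg⟩
    rw [mul_inv_rev, cs.inv_simple, map_mul, LinearEquiv.mul_apply] at hneg
    rcases G.mem_posRoots_or_mem_negRoots (G.act_mem_roots w⁻¹ hv.1) with hpos | hwneg
    · have hroot : G.ρ w⁻¹ v = G.root i := by
        by_contra hne
        exact G.notMem_negRoots_of_mem_posRoots (G.simple_act_mem_posRoots hpos hne) hneg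
      right
      rw [Set.mem_singleton_iff, ← hroot, ← LinearEquiv.mul_apply, ← map_mul, mul_inv_cancel,
        map_one, LinearEquiv.coe_one, id]
    · exact Or.inl ⟨hv, hwneg⟩

end Positivity

section SmallRoots

variable {B W V : Type*} [Group W] {M : CoxeterMatrix B} {cs : CoxeterSystem M W}
  [AddCommGroup V] [Module ℝ V] (G : GeomRep M cs V)

theorem exists_mem_invSet_lt_coord {α β : V} (hα : α ∈ G.Roots) (hβ : β ∈ G.Roots) {j : B}
    (hαj : G.coord α j ≤ 0) (hβj : 0 < G.coord β j) (hform : 1 ≤ G.form α β) {w : W}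
    (hwα : G.ρ w α ∈ G.PosRoots) (hwβ : G.ρ w β ∈ G.NegRoots) (C : ℝ) :
    ∃ δ ∈ G.invSet w⁻¹, C < G.coord δ j := by
  obtain ⟨n, hn⟩ := exists_nat_gt (max C 0 / G.coord β j)
  rw [div_lt_iff₀ hβj] at hn
  obtain ⟨hq, hpq⟩ := le_eval_S_sub_one (by linarith : 2 ≤ 2 * G.form α β) n
  have hroot := G.eval_S_smul_sub_mem_roots hα hβ n
  set p := (S ℝ n).eval (2 * G.form α β)
  set q := (S ℝ (n - 1)).eval (2 * G.form α β)
  have hq_nonneg : 0 ≤ q := n.cast_nonneg.trans hq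
  have hp_nonneg : 0 ≤ p := by linarith
  have hlt : max C 0 < G.coord (-(p • α - q • β)) j := by
    simp only [neg_sub, map_sub, map_smul, Finsupp.sub_apply, Finsupp.smul_apply, smul_eq_mul]
    nlinarith
  refine ⟨-(p • α - q • β), ⟨G.mem_posRoots_of_coord_pos (G.neg_mem_roots hroot)
    ((le_max_right C 0).trans_lt hlt), ?_⟩, (le_max_left C 0).trans_lt hlt⟩
  rw [inv_inv, map_neg]
  refine G.neg_mem_negRoots ⟨G.act_mem_roots w hroot, ?_⟩
  convert hwα.2.smul_add_smul hp_nonneg hq_nonneg hwβ.2 using 1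
  rw [map_sub, map_smul, map_smul]
  module

theorem dominates_of_one_le_form {α β : V} (hα : α ∈ G.Roots) (hβ : β ∈ G.Roots) {j : B}
    (hαj : G.coord α j ≤ 0) (hβj : 0 < G.coord β j) (hform : 1 ≤ G.form α β) :
    G.Dominates β α := by
  intro w hwβ
  refine (G.mem_posRoots_or_mem_negRoots (G.act_mem_roots w hα)).resolve_left fun hwα => ?_
  obtain ⟨C, hC⟩ := ((G.finite_invSet w⁻¹).image fun δ => G.coord δ j).bddAbove
  obtain ⟨δ, hδ, hlt⟩ := G.exists_mem_invSet_lt_coord hα hβ hαj hβj hform hwα hwβ C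
  exact (hC ⟨δ, hδ, rfl⟩).not_gt hlt

variable {G} in
theorem IsSmall.form_root_lt_one {β : V} (hβ : G.IsSmall β) {r : B} (hne : β ≠ G.root r) :
    G.form (G.root r) β < 1 := by
  by_contra! hform
  obtain ⟨j, hj, hpos⟩ := G.exists_coord_pos_of_ne_root hβ.1 hne
  have hrj : G.coord (G.root r) j ≤ 0 := by rw [coord_root, Finsupp.single_eq_of_ne hj]
  exact hne (hβ.2 _ (G.root_mem_posRoots r)
    (G.dominates_of_one_le_form (G.root_mem_roots r) hβ.1.1 hrj hpos hform)).symm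

theorem not_dominates_of_form_nonpos {α β : V} (hα : α ∈ G.PosRoots) (hβ : β ∈ G.PosRoots)
    (hform : G.form β α ≤ 0) : ¬G.Dominates β α := by
  intro hdom
  obtain ⟨t, -, ht⟩ := G.exists_isReflection_act_eq_refl hβ.1
  have hneg : G.ρ t α ∈ G.NegRoots := hdom t (by
    rw [ht, G.refl_self hβ.1]
    exact G.neg_mem_negRoots hβ)
  refine G.notMem_negRoots_of_mem_posRoots ⟨hneg.1, ?_⟩ hneg
  have hcomb := hα.2.smul_add_smul zero_le_one (by linarith : 0 ≤ -(2 * G.form β α)) hβ.2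
  rwa [one_smul, neg_smul, ← sub_eq_add_neg, ← refl_apply, ← ht] at hcomb

variable {G} in
theorem IsSmall.simple_act {β : V} (hβ : G.IsSmall β) {r : B} (hne : β ≠ G.root r)
    (hform : 0 ≤ G.form (G.root r) β) : G.IsSmall (G.ρ (cs.simple r) β) := by
  have hγ := G.simple_act_mem_posRoots hβ.1 hne
  refine ⟨hγ, fun α hα hdom => ?_⟩
  have hαr : α ≠ G.root r := by
    rintro rfl
    refine G.not_dominates_of_form_nonpos hα hγ ?_ hdom
    rw [G.form_symm, form_root_simple_act]
    linarith
  have heq : G.ρ (cs.simple r) α = β := by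
    refine hβ.2 _ (G.simple_act_mem_posRoots hα hαr) fun w hw => ?_
    have := hdom (w * cs.simple r) (by
      rwa [map_mul, LinearEquiv.mul_apply, simple_act_simple_act])
    rwa [map_mul, LinearEquiv.mul_apply] at this
  rw [← heq, simple_act_simple_act]

theorem length_conj_simple_lt {β : V} (hβ : β ∈ G.PosRoots) {r : B} (hne : β ≠ G.root r)
    (hform : 0 < G.form (G.root r) β) {t : W} (ht : cs.IsReflection t)
    (htβ : ∀ v, G.ρ t v = G.refl β v) :
    cs.length (cs.simple r * t * (cs.simple r)⁻¹) < cs.length t := by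
  obtain ⟨j, hj, hpos⟩ := G.exists_coord_pos_of_ne_root hβ hne
  have hcoord : G.coord (G.ρ t (G.root r)) j < 0 := by
    rw [htβ, refl_apply, G.form_symm β, map_sub, map_smul, coord_root, Finsupp.sub_apply,
      Finsupp.single_eq_of_ne hj, Finsupp.smul_apply, smul_eq_mul]
    nlinarith
  have hroot := G.act_mem_roots t (G.root_mem_roots r)
  have hright : cs.IsRightDescent t r :=
    G.isRightDescent_of_act_root_mem_negRoots (G.mem_negRoots_of_coord_neg hroot hcoord)
  have hleft : cs.IsLeftDescent t r := by rwa [← cs.isRightDescent_inv_iff, ht.inv]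
  have hright' : cs.IsRightDescent (cs.simple r * t) r := by
    apply G.isRightDescent_of_act_root_mem_negRoots
    rw [map_mul, LinearEquiv.mul_apply]
    rw [← G.coord_simple_act_of_ne hj] at hcoord
    exact G.mem_negRoots_of_coord_neg (G.act_mem_roots _ hroot) hcoord
  rw [cs.inv_simple]
  exact hright'.trans hleft

theorem form_root_le_neg_half {i j : B} (h : M i j = 0 ∨ 3 ≤ M i j) :
    G.form (G.root i) (G.root j) ≤ -(1 / 2) := by
  by_cases hM : M i j = 0
  · linarith [G.form_root_infinite i j hM]
  · have hM3 : (3 : ℝ) ≤ M i j := by exact_mod_cast h.resolve_left hM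
    have hcos : Real.cos (Real.pi / 3) ≤ Real.cos (Real.pi / M i j) := by
      apply Real.cos_le_cos_of_nonneg_of_le_pi
      · positivity
      · linarith [Real.pi_pos]
      · gcongr
    rw [Real.cos_pi_div_three] at hcos
    rw [G.form_root_finite i j hM]
    linarith

theorem form_root_le_neg_card_support_div_two {γ : V} (hγ : γ ∈ G.PosRoots) {r : B}
    (h : ∀ i, i ≠ r → M r i = 0 ∨ 3 ≤ M r i) (hr : r ∉ (G.coord γ).support) :
    G.form (G.root r) γ ≤ -((G.coord γ).support.card / 2) := by
  calc G.form (G.root r) γ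
      = ∑ i ∈ (G.coord γ).support, G.coord γ i * G.form (G.root r) (G.root i) := by
        conv_lhs => rw [← hγ.2.linearCombination_coord]
        simp [Finsupp.linearCombination_apply, Finsupp.sum]
    _ ≤ (G.coord γ).support.card • (-(1 / 2) : ℝ) := by
        refine Finset.sum_le_card_nsmul _ _ _ fun i hi => ?_
        have hone : 1 ≤ G.coord γ i :=
          (G.coord_mem_zeroOrGeOne hγ i).resolve_left (Finsupp.mem_support_iff.1 hi)
        have hhalf := G.form_root_le_neg_half (h i (ne_of_mem_of_not_mem hi hr))
        nlinarith
    _ = -((G.coord γ).support.card / 2) := by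
        rw [nsmul_eq_mul]
        ring

theorem support_coord_subset_insert (r : B) (v : V) :
    (G.coord v).support ⊆ insert r (G.coord (G.ρ (cs.simple r) v)).support := by
  intro i hi
  rcases eq_or_ne i r with rfl | hir
  · exact Finset.mem_insert_self _ _
  · refine Finset.mem_insert_of_mem (Finsupp.mem_support_iff.2 ?_)
    rw [G.coord_simple_act_of_ne hir]
    exact Finsupp.mem_support_iff.1 hi

variable {G} in
theorem IsSmall.card_support_coord_le_two (h : ∀ i j : B, i ≠ j → M i j = 0 ∨ 3 ≤ M i j)
    {β : V} (hβ : G.IsSmall β) : (G.coord β).support.card ≤ 2 := by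
  obtain ⟨t, ht, htβ⟩ := G.exists_isReflection_act_eq_refl hβ.1.1
  induction hl : cs.length t using Nat.strong_induction_on generalizing β t with
  | _ l ih =>
  obtain ⟨r, hr⟩ := G.exists_form_root_pos hβ.1
  rcases eq_or_ne β (G.root r) with rfl | hne
  · rw [coord_root]
    exact (Finset.card_le_card Finsupp.support_single_subset).trans (by simp)
  have hγ := hβ.simple_act hne hr.le
  set γ := G.ρ (cs.simple r) β with hγ_def
  have hγcard : (G.coord γ).support.card ≤ 2 :=
    ih _ (hl ▸ G.length_conj_simple_lt hβ.1 hne hr ht htβ) hγ _ (ht.conj _)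
      (G.conj_act_eq_refl htβ _) rfl
  have hsub := Finset.card_le_card (G.support_coord_subset_insert r β)
  by_contra! hcard
  have hrγ : r ∉ (G.coord γ).support := by
    intro hmem
    rw [Finset.insert_eq_of_mem hmem] at hsub
    lia
  rw [Finset.card_insert_of_notMem hrγ] at hsub
  have hγcard_eq : (G.coord γ).support.card = 2 := by lia
  have hformγ := G.form_root_le_neg_card_support_div_two hγ.1 (fun i hi => h r i hi.symm) hrγ
  rw [hγcard_eq, hγ_def, form_root_simple_act] at hformγ
  have hlt := hβ.form_root_lt_one hne
  norm_num at hformγ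
  linarith

theorem exists_eq_smul_add_smul_of_card_support_le_two {β : V} (hβ : β ∈ G.PosRoots)
    (hcard : (G.coord β).support.card ≤ 2) :
    ∃ (i j : B) (a b : ℝ), 0 ≤ a ∧ 0 ≤ b ∧ β = a • G.root i + b • G.root j := by
  have hsum : ∑ i ∈ (G.coord β).support, G.coord β i • G.root i = β :=
    hβ.2.linearCombination_coord
  obtain h0 | h1 | h2 : (G.coord β).support.card = 0 ∨ (G.coord β).support.card = 1 ∨
      (G.coord β).support.card = 2 := by lia
  · rw [Finset.card_eq_zero.1 h0, Finset.sum_empty] at hsum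
    exact absurd hsum.symm (G.ne_zero_of_mem_roots hβ.1)
  · obtain ⟨i, hi⟩ := Finset.card_eq_one.1 h1
    rw [hi, Finset.sum_singleton] at hsum
    exact ⟨i, i, G.coord β i, 0, hβ.2.coord_nonneg i, le_rfl, by rw [hsum, zero_smul, add_zero]⟩
  · obtain ⟨i, j, hij, hsupp⟩ := Finset.card_eq_two.1 h2
    rw [hsupp, Finset.sum_pair hij] at hsum
    exact ⟨i, j, G.coord β i, G.coord β j, hβ.2.coord_nonneg i, hβ.2.coord_nonneg j, hsum.symm⟩

end SmallRoots

end GeomRep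

theorem smallRoots_on_edges_general {B : Type*} {W : Type*} [Group W] {M : CoxeterMatrix B}
    (cs : CoxeterSystem M W) {V : Type*} [AddCommGroup V] [Module ℝ V]
    (G : GeomRep M cs V)
    (h : ∀ i j : B, i ≠ j → M i j = 0 ∨ 3 ≤ M i j) :
    ∀ β : V, G.IsSmall β →
      ∃ (i j : B) (a b : ℝ), 0 ≤ a ∧ 0 ≤ b ∧ β = a • G.root i + b • G.root j := fun _ hβ =>
  G.exists_eq_smul_add_smul_of_card_support_le_two hβ.1 (hβ.card_support_coord_le_two h)

/-- If no two generators commute (all `m_{st} ≥ 3`, possibly `∞`), every small root is a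
nonnegative combination of at most two simple roots. -/
theorem smallRoots_on_edges {B : Type*} {W : Type*} [Group W] {M : CoxeterMatrix B}
    (cs : CoxeterSystem M W) {V : Type*} [AddCommGroup V] [Module ℝ V]
    (G : GeomRep M cs V) [Finite B]
    (h : ∀ i j : B, i ≠ j → M i j = 0 ∨ 3 ≤ M i j) :
    ∀ β : V, G.IsSmall β →
      ∃ (i j : B) (a b : ℝ), 0 ≤ a ∧ 0 ≤ b ∧ β = a • G.root i + b • G.root j :=
  smallRoots_on_edges_general cs G h
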